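/- arXiv:1812.03435 — 2 statements merged into one kernel-verified Lean document; each statement's English description precedes it below -/
import Mathlib

section
/- Let t ∈ ℤ_+ and let S be a finite-dimensional simple module over the Lie superalgebra p^(t). Then dim S = 1. -/
/-- A module over the Lie superalgebra `p^{(t)} = ⊕_{m>t} ℂ L_m ⊕ ⊕_{m>t} ℂ G_{m+1/2}`
(a subalgebra of the Neveu–Schwarz algebra).  `L m` is the action of `L_m` and `G j` is
the action of `G_{j+1/2}`; only the operators with index `> t` are part of the structure
(the relations are imposed only for indices `> t`). -/
structure PRep (t : ℕ) : Type 1 where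
  carrier : Type
  [isAddCommGroup : AddCommGroup carrier]
  [isModule : Module ℂ carrier]
  L : ℤ → carrier →ₗ[ℂ] carrier
  G : ℤ → carrier →ₗ[ℂ] carrier
  rel_LL : ∀ m n : ℤ, (t : ℤ) < m → (t : ℤ) < n → ∀ v : carrier,
    L m (L n v) - L n (L m v) = ((m : ℂ) - n) • L (m + n) v
  rel_LG : ∀ m j : ℤ, (t : ℤ) < m → (t : ℤ) < j → ∀ v : carrier,
    L m (G j v) - G j (L m v) = (((m : ℂ) - 2 * j - 1) / 2) • G (m + j) v
  rel_GG : ∀ j k : ℤ, (t : ℤ) < j → (t : ℤ) < k → ∀ v : carrier,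
    G j (G k v) + G k (G j v) = (2 : ℂ) • L (j + k + 1) v

attribute [instance] PRep.isAddCommGroup PRep.isModule

def PRep.Invariant {t : ℕ} (V : PRep t) (p : Submodule ℂ V.carrier) : Prop :=
  (∀ m : ℤ, (t : ℤ) < m → ∀ v ∈ p, V.L m v ∈ p) ∧
    (∀ j : ℤ, (t : ℤ) < j → ∀ v ∈ p, V.G j v ∈ p)

def PRep.IsSimple {t : ℕ} (V : PRep t) : Prop :=
  (∃ v : V.carrier, v ≠ 0) ∧
    ∀ p : Submodule ℂ V.carrier, V.Invariant p → p = ⊥ ∨ p = ⊤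

namespace PRep
open Polynomial

variable {t : ℕ}

lemma schur (S : PRep t) (hfd : FiniteDimensional ℂ S.carrier) (hs : S.IsSimple)
    (f : S.carrier →ₗ[ℂ] S.carrier)
    (hL : ∀ m : ℤ, (t : ℤ) < m → ∀ v, S.L m (f v) = f (S.L m v))
    (hG : ∀ m : ℤ, (t : ℤ) < m → ∀ v, S.G m (f v) = f (S.G m v)) :
    ∃ c : ℂ, ∀ v, f v = c • v := by
  obtain ⟨⟨w, hw⟩, hp⟩ := hs
  have : Nontrivial S.carrier := ⟨⟨w, 0, hw⟩⟩
  obtain ⟨c, hc⟩ := Module.End.exists_eigenvalue f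
  refine ⟨c, fun v => ?_⟩
  have := hp (Module.End.eigenspace f c) ⟨?_, ?_⟩
  · rcases this with h | h
    · exact absurd h hc
    · have : v ∈ Module.End.eigenspace f c := by rw [h]; trivial
      exact Module.End.mem_eigenspace_iff.1 this
  · intro m hm v hv
    rw [Module.End.mem_eigenspace_iff] at hv ⊢
    rw [← hL m hm, hv, map_smul]
  · intro m hm v hv
    rw [Module.End.mem_eigenspace_iff] at hv ⊢
    rw [← hG m hm, hv, map_smul]

lemma L_zero_of_central (S : PRep t) (hfd : FiniteDimensional ℂ S.carrier) (hs : S.IsSimple)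
    (k : ℤ) (hk : 2 * (t : ℤ) + 3 ≤ k)
    (hL : ∀ m : ℤ, (t : ℤ) < m → ∀ v, S.L m (S.L k v) = S.L k (S.L m v))
    (hG : ∀ m : ℤ, (t : ℤ) < m → ∀ v, S.G m (S.L k v) = S.L k (S.G m v)) :
    S.L k = 0 := by
  obtain ⟨c, hc⟩ := schur S hfd hs (S.L k) hL hG
  obtain ⟨⟨w, hw⟩, -⟩ := hs
  have : Nontrivial S.carrier := ⟨⟨w, 0, hw⟩⟩
  have h1 : S.L k = c • LinearMap.id := by ext v; simp [hc]
  have h2 : S.L (t+1) ∘ₗ S.L (k-t-1) - S.L (k-t-1) ∘ₗ S.L (t+1)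
      = ((((t+1 : ℤ)) : ℂ) - ((k-t-1 : ℤ) : ℂ)) • S.L k := by
    ext v
    have := S.rel_LL (t+1) (k-t-1) (by omega) (by omega) v
    rw [show (t:ℤ)+1+(k-t-1) = k by ring] at this
    simpa using this
  have hne : (((t+1 : ℤ)) : ℂ) - ((k-t-1 : ℤ) : ℂ) ≠ 0 := by
    rw [sub_ne_zero]
    intro h
    have := Int.cast_injective h
    omega
  have h3 := congrArg (LinearMap.trace ℂ S.carrier) h2
  rw [map_sub, LinearMap.trace_comp_comm', sub_self, map_smul, h1, map_smul, LinearMap.trace_id] at h3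
  have h4 : (Module.finrank ℂ S.carrier : ℂ) ≠ 0 := by
    exact_mod_cast Module.finrank_pos.ne'
  have : c = 0 := by
    simp only [smul_eq_mul] at h3
    exact (mul_eq_zero.1 ((mul_eq_zero.1 h3.symm).resolve_left hne)).resolve_right h4
  rw [h1, this, zero_smul]

lemma G_zero_of_central (S : PRep t) (hs : S.IsSimple)
    (k : ℤ) 
    (h2 : ∀ v, S.G k (S.G k v) = 0)
    (hL : ∀ m : ℤ, (t : ℤ) < m → ∀ v, S.L m (S.G k v) = S.G k (S.L m v))
    (hG : ∀ m : ℤ, (t : ℤ) < m → ∀ v, S.G k (S.G m v) = - S.G m (S.G k v)) :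
    S.G k = 0 := by
  obtain ⟨-, hp⟩ := hs
  have hh := hp (LinearMap.ker (S.G k)) ⟨?_, ?_⟩
  rcases hh with h | h
  · ext v
    have : S.G k v ∈ LinearMap.ker (S.G k) := h2 v
    rw [h] at this
    simpa using this
  · exact LinearMap.ker_eq_top.1 h
  · intro m hm v hv
    rw [LinearMap.mem_ker] at hv ⊢
    rw [← hL m hm, hv, map_zero]
  · intro m hm v hv
    rw [LinearMap.mem_ker] at hv ⊢
    rw [hG m hm, hv, map_zero, neg_zero]

lemma descend (S : PRep t) (hfd : FiniteDimensional ℂ S.carrier) (hs : S.IsSimple)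
    (n : ℤ) (hn : (t : ℤ) < n)
    (h1 : ∀ k, n + 1 ≤ k → 2 * (t : ℤ) + 3 ≤ k → S.L k = 0)
    (h2 : ∀ k, n + 1 ≤ k → S.G k = 0) :
    (∀ k, n ≤ k → 2 * (t : ℤ) + 3 ≤ k → S.L k = 0) ∧ (∀ k, n ≤ k → S.G k = 0) := by
  have hG : S.G n = 0 := by
    have anti : ∀ m : ℤ, (t : ℤ) < m → ∀ v, S.G n (S.G m v) + S.G m (S.G n v) = 0 := by
      intro m hm v
      rw [S.rel_GG n m hn hm v, h1 _ (by omega) (by omega)]; simp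
    apply G_zero_of_central S hs
    · intro v
      have := anti n hn v
      rw [← two_smul ℂ] at this
      simpa using this
    · intro m hm v
      rw [← sub_eq_zero, S.rel_LG m n hm hn v, h2 _ (by omega)]; simp
    · intro m hm v
      exact eq_neg_of_add_eq_zero_left (anti m hm v)
  have hG' : ∀ k, n ≤ k → S.G k = 0 := by
    intro k hk
    rcases eq_or_lt_of_le hk with rfl | h
    · exact hG
    · exact h2 k (by omega)
  refine ⟨fun k hk hk' => ?_, hG'⟩
  rcases eq_or_lt_of_le hk with rfl | h
  · apply L_zero_of_central S hfd hs _ hk'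
    · intro m hm v
      rw [← sub_eq_zero, S.rel_LL m n hm hn v, h1 _ (by omega) (by omega)]; simp
    · intro m hm v
      symm
      rw [← sub_eq_zero, S.rel_LG n m hn hm v, h2 _ (by omega)]; simp
  · exact h1 k (by omega) hk'

/-- the combination `∑ f_i L_{k+i}` -/
noncomputable def Phi (S : PRep t) (f : ℂ[X]) (k : ℤ) : S.carrier →ₗ[ℂ] S.carrier :=
  f.sum fun i a => a • S.L (k + i)

lemma Phi_eq (S : PRep t) (f : ℂ[X]) (k : ℤ) (N : ℕ) (h : f.natDegree < N) :
    Phi S f k = ∑ i ∈ Finset.range N, f.coeff i • S.L (k + i) :=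
  Polynomial.sum_over_range' f (by simp) N h

def Van (S : PRep t) (f : ℂ[X]) : Prop := ∃ K : ℤ, ∀ k, K ≤ k → Phi S f k = 0

lemma Van_step (S : PRep t) (f : ℂ[X]) (h : Van S f) (a : ℂ) :
    Van S (X * derivative f - C a * f) := by
  obtain ⟨K, hK⟩ := h
  set K' := max K (t+1) with hK'
  refine ⟨K' + t + 1, fun k hk => ?_⟩
  set N := f.natDegree + 2
  have hd : (X * derivative f - C a * f).natDegree < N := by
    refine lt_of_le_of_lt (natDegree_sub_le _ _) (max_lt ?_ ?_)
    · refine lt_of_le_of_lt natDegree_mul_le ?_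
      have := natDegree_derivative_le f
      rw [natDegree_X]; omega
    · refine lt_of_le_of_lt (natDegree_C_mul_le _ _) (by omega)
  have hc : ∀ i : ℕ, (X * derivative f - C a * f).coeff i = ((i : ℂ) - a) * f.coeff i := by
    intro i
    rw [coeff_sub, coeff_C_mul]
    cases i with
    | zero => simp
    | succ i => rw [coeff_X_mul, coeff_derivative]; push_cast; ring
  rw [Phi_eq _ _ _ N hd]
  ext v
  have e1 := Phi_eq S f (k-t-1) N (by omega)
  rw [hK _ (by omega)] at e1
  have e2 := Phi_eq S f k N (by omega)
  rw [hK _ (by omega)] at e2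
  have e1a := congrArg (fun g => S.L (t+1) (g v)) e1
  have e1b := congrArg (fun g => g (S.L (t+1) v)) e1
  have e2a := congrArg (fun g => g v) e2
  simp only [LinearMap.zero_apply, LinearMap.sum_apply, LinearMap.smul_apply, map_sum, map_smul,
    map_zero] at e1a e1b e2a ⊢
  have key : ∀ i : ℕ, ((X * derivative f - C a * f).coeff i) • S.L (k+i) v =
      (2 * (t:ℂ) + 2 - k - a) • (f.coeff i • S.L (k+i) v)
      - (f.coeff i • S.L (t+1) (S.L (k-t-1+i) v) - f.coeff i • S.L (k-t-1+i) (S.L (t+1) v)) := by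
    intro i
    have := S.rel_LL (t+1) (k-t-1+i) (by omega) (by omega) v
    rw [show (t:ℤ)+1+(k-t-1+i) = k+i by ring] at this
    rw [← smul_sub, this, hc, smul_smul, smul_smul, ← sub_smul]
    congr 1
    push_cast
    ring
  rw [Finset.sum_congr rfl (fun i _ => key i), Finset.sum_sub_distrib, Finset.sum_sub_distrib,
    ← Finset.smul_sum, ← e1a, ← e1b, ← e2a]
  simp

lemma Van_mono (S : PRep t) : ∀ (n : ℕ) (f : ℂ[X]), f ≠ 0 → f.support.card ≤ n → Van S f →
    ∃ i : ℕ, Van S (X ^ i) := by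
  intro n
  induction n with
  | zero =>
    intro f hf hn _
    exact absurd (by simpa using hn) hf
  | succ n ih =>
    intro f hf hn hV
    set d := f.natDegree
    have hV' := Van_step S f hV (d : ℂ)
    have hc : ∀ i : ℕ, (X * derivative f - C (d:ℂ) * f).coeff i = ((i : ℂ) - d) * f.coeff i := by
      intro i
      rw [coeff_sub, coeff_C_mul]
      cases i with
      | zero => simp
      | succ i => rw [coeff_X_mul, coeff_derivative]; push_cast; ring
    by_cases h0 : X * derivative f - C (d:ℂ) * f = 0
    · refine ⟨d, ?_⟩
      have hlc : f.coeff d ≠ 0 := by simpa [d] using hf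
      have hmon : ∀ i, i ≠ d → f.coeff i = 0 := by
        intro i hi
        have := hc i
        rw [h0, coeff_zero] at this
        have h' : (i:ℂ) - d ≠ 0 := by
          rw [sub_ne_zero]; exact_mod_cast hi
        simpa [h'] using this.symm
      obtain ⟨K, hK⟩ := hV
      refine ⟨K, fun k hk => ?_⟩
      have := hK k hk
      rw [Phi_eq S f k (d+1) (by omega), Finset.sum_eq_single d] at this
      · rw [Phi_eq S (X^d) k (d+1) (by simp), Finset.sum_eq_single d]
        · have h3 : S.L (k+d) = 0 := by simpa [hlc] using this
          rw [h3, smul_zero]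
        · intro i _ hi
          simp [coeff_X_pow, hi]
        · simp
      · intro i _ hi
        simp [hmon i hi]
      · simp
    · refine ih _ h0 ?_ hV'
      have : (X * derivative f - C (d:ℂ) * f).support ⊆ f.support.erase d := by
        intro i hi
        rw [mem_support_iff, hc] at hi
        rw [Finset.mem_erase, mem_support_iff]
        refine ⟨?_, right_ne_zero_of_mul hi⟩
        rintro rfl
        simp at hi
      have h5 := Finset.card_le_card this
      have hmem : d ∈ f.support := by
        rw [mem_support_iff]; simpa [d] using hf
      rw [Finset.card_erase_of_mem hmem] at h5
      omega

lemma exists_Van (S : PRep t) (hfd : FiniteDimensional ℂ S.carrier) :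
    ∃ f : ℂ[X], f ≠ 0 ∧ Van S f := by
  have hnl : ¬ LinearIndependent ℂ (fun i : ℕ => S.L (t + 1 + i)) := by
    intro h
    have := h.finite
    exact not_finite ℕ
  rw [not_linearIndependent_iff] at hnl
  obtain ⟨s, g, hsum, j, hj, hgj⟩ := hnl
  set f : ℂ[X] := ∑ i ∈ s, monomial i (g i) with hf
  have hco : ∀ i, f.coeff i = if i ∈ s then g i else 0 := by
    intro i
    simp [hf, finsetSum_coeff, coeff_monomial]
  have hPhi : ∀ k, Phi S f k = ∑ i ∈ s, g i • S.L (k+i) := by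
    intro k
    have hsub : f.support ⊆ s := by
      intro i hi
      rw [mem_support_iff, hco] at hi
      by_contra h
      simp [h] at hi
    unfold Phi
    rw [Polynomial.sum_def, Finset.sum_subset hsub]
    · refine Finset.sum_congr rfl fun i hi => ?_
      rw [hco, if_pos hi]
    · intro i _ hi
      rw [notMem_support_iff.1 hi, zero_smul]
  refine ⟨f, ?_, 3 * t + 6, fun k hk => ?_⟩
  · intro h
    have := hco j
    rw [h, if_pos hj] at this
    exact hgj (by simpa using this.symm)
  have R1 : ∀ m : ℤ, (t:ℤ) < m → ∀ v, ∑ i ∈ s, (g i * (m - (t+1+i))) • S.L (m + (t+1+i)) v = 0 := by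
    intro m hm v
    have ea := congrArg (fun F => S.L m (F v)) hsum
    have eb := congrArg (fun F => F (S.L m v)) hsum
    simp only [LinearMap.zero_apply, LinearMap.sum_apply, LinearMap.smul_apply, map_sum, map_smul,
      map_zero] at ea eb
    have := sub_eq_zero.2 (ea.trans eb.symm)
    rw [← Finset.sum_sub_distrib] at this
    rw [← this]
    refine Finset.sum_congr rfl fun i _ => ?_
    rw [← smul_sub, S.rel_LL m (t+1+i) hm (by omega) v, smul_smul]
    push_cast
    rfl
  have R2 : ∀ m n : ℤ, (t:ℤ) < m → (t:ℤ) < n → ∀ v,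
      ∑ i ∈ s, (g i * (m - (t+1+i)) * (n - (m + (t+1+i)))) • S.L (n + (m + (t+1+i))) v = 0 := by
    intro m n hm hn v
    have ea := congrArg (S.L n) (R1 m hm v)
    have eb := R1 m hm (S.L n v)
    simp only [map_sum, map_smul, map_zero] at ea
    have := sub_eq_zero.2 (ea.trans eb.symm)
    rw [← Finset.sum_sub_distrib] at this
    rw [← this]
    refine Finset.sum_congr rfl fun i _ => ?_
    rw [← smul_sub, S.rel_LL n (m+(t+1+i)) hn (by omega) v, smul_smul]
    push_cast
    rfl
  rw [hPhi]
  ext v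
  simp only [LinearMap.zero_apply, LinearMap.sum_apply, LinearMap.smul_apply]
  have a1 := R2 (t+1) (k-2*t-2) (by omega) (by omega) v
  have a2 := R2 (t+2) (k-2*t-3) (by omega) (by omega) v
  have a3 := R2 (t+3) (k-2*t-4) (by omega) (by omega) v
  have hidx1 : ∀ i : ℕ, k-2*t-2 + ((t:ℤ)+1+(t+1+i)) = k+i := fun i => by ring
  have hidx2 : ∀ i : ℕ, k-2*t-3 + ((t:ℤ)+2+(t+1+i)) = k+i := fun i => by ring
  have hidx3 : ∀ i : ℕ, k-2*t-4 + ((t:ℤ)+3+(t+1+i)) = k+i := fun i => by ring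
  simp only [hidx1] at a1
  simp only [hidx2] at a2
  simp only [hidx3] at a3
  have hall : (-4 : ℂ) • ∑ i ∈ s, g i • S.L (k+i) v = 0 := by
    have a4 := congrArg₂ (· + ·) (congrArg₂ (· - ·) a1 (congrArg (fun x => (2:ℂ) • x) a2)) a3
    simp only [smul_zero, sub_zero, add_zero] at a4
    refine Eq.trans ?_ a4
    rw [Finset.smul_sum, Finset.smul_sum, ← Finset.sum_sub_distrib, ← Finset.sum_add_distrib]
    refine Finset.sum_congr rfl fun i _ => ?_
    rw [smul_smul, smul_smul, ← sub_smul, ← add_smul]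
    congr 1
    push_cast
    ring
  simpa using hall

lemma eventually_zero (S : PRep t) (hfd : FiniteDimensional ℂ S.carrier) :
    ∃ N : ℕ, ∀ k : ℤ, (t:ℤ) + 1 + N ≤ k → S.L k = 0 ∧ S.G k = 0 := by
  obtain ⟨f, hf, hV⟩ := exists_Van S hfd
  obtain ⟨i, K, hK⟩ := Van_mono S _ f hf le_rfl hV
  have hL : ∀ k : ℤ, K + i ≤ k → S.L k = 0 := by
    intro k hk
    have := hK (k - i) (by omega)
    rw [Phi_eq S (X^i) _ (i+1) (by simp), Finset.sum_eq_single i] at this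
    · simpa using this
    · intro j _ hj
      simp [coeff_X_pow, hj]
    · simp
  refine ⟨(K + i).toNat + 2 * t + 4, fun k hk => ⟨hL k (by omega), ?_⟩⟩
  ext v
  have h := S.rel_LG (k-t-1) (t+1) (by omega) (by omega) v
  rw [hL _ (by omega), show k - t - 1 + ((t:ℤ)+1) = k by ring] at h
  have hne : (((k-t-1 : ℤ) : ℂ) - 2 * ((t+1 : ℤ) : ℂ) - 1) / 2 ≠ 0 := by
    apply div_ne_zero _ two_ne_zero
    have : (k-t-1 : ℤ) - 2 * (t+1 : ℤ) - 1 ≠ 0 := by omega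
    exact_mod_cast this
  simp only [LinearMap.zero_apply, map_zero, sub_zero] at h ⊢
  exact (smul_eq_zero.1 h.symm).resolve_left hne

lemma descend_all (S : PRep t) (hfd : FiniteDimensional ℂ S.carrier) (hs : S.IsSimple)
    (N : ℕ) : ((∀ k, (t:ℤ) + 1 + N ≤ k → 2 * (t : ℤ) + 3 ≤ k → S.L k = 0) ∧
      (∀ k, (t:ℤ) + 1 + N ≤ k → S.G k = 0)) →
    (∀ k, (t:ℤ) + 1 ≤ k → 2 * (t : ℤ) + 3 ≤ k → S.L k = 0) ∧
      (∀ k, (t:ℤ) + 1 ≤ k → S.G k = 0) := by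
  induction N with
  | zero => simp
  | succ N ih =>
    rintro ⟨h1, h2⟩
    apply ih
    apply descend S hfd hs _ (by omega)
    · intro k hk; exact h1 k (by push_cast; omega)
    · intro k hk; exact h2 k (by push_cast; omega)

end PRep

/-- Let `t ∈ ℤ_+` and let `S` be a finite dimensional simple module over
the Lie superalgebra `p^{(t)}`.  Then `dim S = 1`. -/
theorem pRep_finite_dimensional_simple_dim_one
    (t : ℕ) (ht : 0 < t) (S : PRep t)
    (hfd : FiniteDimensional ℂ S.carrier) (hsimple : S.IsSimple) :
    Module.finrank ℂ S.carrier = 1 := by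
  obtain ⟨N, hN⟩ := S.eventually_zero hfd
  obtain ⟨h1, h2⟩ := S.descend_all hfd hsimple N
    ⟨fun k hk _ => (hN k hk).1, fun k hk => (hN k hk).2⟩
  have hsc : ∀ n : ℤ, (t:ℤ) < n → ∃ c : ℂ, ∀ v, S.L n v = c • v := by
    intro n hn
    apply S.schur hfd hsimple
    · intro m hm v
      by_cases hmn : m = n
      · rw [hmn]
      · rw [← sub_eq_zero, S.rel_LL m n hm hn v, h1 _ (by omega) (by omega)]; simp
    · intro m hm v
      rw [h2 m (by omega)]; simp
  obtain ⟨⟨w, hw⟩, hp⟩ := hsimple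
  have hh := hp (Submodule.span ℂ {w}) ⟨?_, ?_⟩
  rcases hh with h | h
  · exact absurd (by simpa using h) hw
  · rw [← finrank_top, ← h, finrank_span_singleton hw]
  · intro m hm v hv
    obtain ⟨c, hc⟩ := hsc m hm
    rw [hc]
    exact Submodule.smul_mem _ _ hv
  · intro m hm v hv
    rw [h2 m (by omega)]
    simp
end

section
/- Let t ∈ ℤ_+ and let S be a finite-dimensional simple module over the Lie superalgebra p^(t). Then [p^(t)_1̄, p^(t)_1̄] S = 0, where p^(t)_1̄ = ⊕_{m>t} ℂG_{m+1/2} is the odd part of p^(t). -/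
theorem aux_bracket {A : Type*} [Ring A] [Algebra ℂ A] (t : ℤ) (L : ℤ → A) (ht : 0 ≤ t)
    (hL : ∀ m n : ℤ, t < m → t < n → L m * L n - L n * L m = ((m : ℂ) - n) • L (m + n))
    (I : Finset ℕ) (f : ℕ → ℂ) (s k : ℤ) (hs : t < s) (hk : t < k)
    (h : ∑ i ∈ I, f i • L (i + s) = 0) :
    ∑ i ∈ I, (f i * (k - (i + s))) • L (i + (s + k)) = 0 := by
  have h1 : L k * (∑ i ∈ I, f i • L (i + s)) - (∑ i ∈ I, f i • L (i + s)) * L k = 0 := by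
    rw [h]; simp
  rw [Finset.mul_sum, Finset.sum_mul, ← Finset.sum_sub_distrib] at h1
  rw [← h1]
  refine Finset.sum_congr rfl fun i _ => ?_
  have := hL k (i + s) hk (by omega)
  rw [mul_smul_comm, smul_mul_assoc, ← smul_sub, this, smul_smul]
  have e : (i : ℤ) + (s + k) = k + (i + s) := by ring
  rw [e]; push_cast; rfl

theorem aux_elim {A : Type*} [Ring A] [Algebra ℂ A] (t : ℤ) (L : ℤ → A) (ht : 0 ≤ t)
    (hL : ∀ m n : ℤ, t < m → t < n → L m * L n - L n * L m = ((m : ℂ) - n) • L (m + n))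
    (I : Finset ℕ) : ∀ (f : ℕ → ℂ) (s₀ : ℤ), (∃ i ∈ I, f i ≠ 0) →
    (∀ s, s₀ ≤ s → ∑ i ∈ I, f i • L (i + s) = 0) → ∃ N : ℤ, ∀ m, N ≤ m → L m = 0 := by
  induction I using Finset.induction_on with
  | empty => rintro f s₀ ⟨i, hi, _⟩; simp at hi
  | insert a I ha ih =>
    intro f s₀ hex h
    by_cases hI : ∃ i ∈ I, f i ≠ 0
    · obtain ⟨i, hi, hfi⟩ := hI
      refine ih (fun i => f i * ((a : ℂ) - i)) (max s₀ (t+1) + (t + 1)) ⟨i, hi, ?_⟩ ?_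
      · refine mul_ne_zero hfi (sub_ne_zero.2 ?_)
        intro e
        exact ha ((Nat.cast_injective e) ▸ hi)
      · intro s hs
        have h1 := aux_bracket t L ht hL _ f (s - (t+1)) (t+1) (by omega) (by omega)
          (h _ (by omega))
        have h2 := h s (by omega)
        have e : s - (t+1) + (t+1) = s := by ring
        rw [e] at h1
        have h3 : ∑ i ∈ insert a I, (f i * ((a : ℂ) - i)) • L (i + s) = 0 := by
          have : ∑ i ∈ insert a I, (f i * ((a : ℂ) - i)) • L (i + s) =
              ∑ i ∈ insert a I, (f i * (((t+1 : ℤ) : ℂ) - (i + ((s - (t+1) : ℤ) : ℂ)))) • L (i + s)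
              + ((a : ℂ) - ((t+1 : ℤ) : ℂ) + ((s - (t+1) : ℤ) : ℂ)) •
                ∑ i ∈ insert a I, f i • L (i + s) := by
            rw [Finset.smul_sum, ← Finset.sum_add_distrib]
            refine Finset.sum_congr rfl fun i _ => ?_
            rw [smul_smul, ← add_smul]; congr 1; ring
          rw [this, h1, h2]; simp
        rw [Finset.sum_insert ha] at h3
        simpa using h3
    · push Not at hI
      have hfa : f a ≠ 0 := by
        obtain ⟨i, hi, hfi⟩ := hex
        rcases Finset.mem_insert.1 hi with rfl | hi
        · exact hfi
        · exact absurd (hI i hi) hfi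
      refine ⟨a + s₀, fun m hm => ?_⟩
      have := h (m - a) (by omega)
      rw [Finset.sum_insert ha, Finset.sum_eq_zero (fun i hi => by rw [hI i hi, zero_smul]),
        add_zero] at this
      have := (smul_eq_zero.1 this).resolve_left hfa
      simpa using this

theorem aux_vanish {A : Type*} [Ring A] [Algebra ℂ A] [FiniteDimensional ℂ A]
    (t : ℤ) (L : ℤ → A) (ht : 0 ≤ t)
    (hL : ∀ m n : ℤ, t < m → t < n → L m * L n - L n * L m = ((m : ℂ) - n) • L (m + n)) :
    ∃ N : ℤ, ∀ m, N ≤ m → L m = 0 := by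
  have hnot : ¬ LinearIndependent ℂ (fun i : ℕ => L (i + (t + 1))) := by
    intro h
    have := h.finite
    exact not_finite ℕ
  rw [not_linearIndependent_iff] at hnot
  obtain ⟨I, f, h0, hex⟩ := hnot
  refine aux_elim t L ht hL I f (4 * t + 10) hex fun s hs => ?_
  have key : ∀ k, t < k → k < t + 5 →
      ∑ i ∈ I, (f i * ((k : ℂ) - (i + ((t + 1 : ℤ) : ℂ))) *
        (((s - (t + 1) - k : ℤ) : ℂ) - (i + ((t + 1 + k : ℤ) : ℂ)))) • L (i + s) = 0 := by
    intro k hk hk'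
    have h1 := aux_bracket t L ht hL I f (t+1) k (by omega) hk h0
    have h2 := aux_bracket t L ht hL I _ (t+1+k) (s - (t+1) - k) (by omega) (by omega) h1
    have e : t + 1 + k + (s - (t + 1) - k) = s := by ring
    rw [e] at h2
    exact h2
  have k1 := key (t+1) (by omega) (by omega)
  have k2 := key (t+2) (by omega) (by omega)
  have k3 := key (t+3) (by omega) (by omega)
  have hc : (-4 : ℂ) • ∑ i ∈ I, f i • L (i + s) = 0 := by
    have := congrArg₂ (· + ·) (congrArg₂ (· - ·) k1 (congrArg (fun x => (2 : ℂ) • x) k2)) k3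
    simp only [smul_zero, sub_zero, add_zero] at this
    rw [← this, Finset.smul_sum, Finset.smul_sum, ← Finset.sum_sub_distrib,
      ← Finset.sum_add_distrib]
    refine Finset.sum_congr rfl fun i _ => ?_
    rw [smul_smul, smul_smul, ← sub_smul, ← add_smul]
    congr 1
    push_cast
    ring
  exact (smul_eq_zero.1 hc).resolve_left (by norm_num)

theorem aux_G {t : ℕ} (S : PRep t) (hsimple : S.IsSimple) (n : ℤ) (hn : (t : ℤ) < n)
    (hL : ∀ m, n < m → S.L m = 0) (hG : ∀ m, n < m → S.G m = 0) : S.G n = 0 := by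
  have hinv : S.Invariant (LinearMap.ker (S.G n)) := by
    constructor
    · intro m hm v hv
      rw [LinearMap.mem_ker] at hv ⊢
      have := S.rel_LG m n hm hn v
      rw [hv, hG (m + n) (by omega)] at this
      simpa using this
    · intro j hj v hv
      rw [LinearMap.mem_ker] at hv ⊢
      have := S.rel_GG j n hj hn v
      rw [hv, hL (j + n + 1) (by omega)] at this
      simpa using this
  rcases hsimple.2 _ hinv with h | h
  · ext v
    have h2 : S.G n v ∈ LinearMap.ker (S.G n) := by
      rw [LinearMap.mem_ker]
      have := S.rel_GG n n hn hn v
      rw [hL (n + n + 1) (by omega), ← two_smul ℂ] at this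
      simpa using this
    rw [h] at h2
    simpa using h2
  · exact LinearMap.ker_eq_top.1 h

theorem aux_L {t : ℕ} (S : PRep t) (hfd : FiniteDimensional ℂ S.carrier)
    (hsimple : S.IsSimple) (n : ℤ) (hn : 2 * (t : ℤ) + 3 ≤ n)
    (hL : ∀ m, n < m → S.L m = 0) (hG : ∀ m, n < m → S.G m = 0) : S.L n = 0 := by
  obtain ⟨v₀, hv₀⟩ := hsimple.1
  have : Nontrivial S.carrier := ⟨v₀, 0, hv₀⟩
  obtain ⟨c, hc⟩ := Module.End.exists_eigenvalue (K := ℂ) (V := S.carrier) (S.L n)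
  have hinv : S.Invariant (Module.End.eigenspace (S.L n) c) := by
    constructor
    · intro m hm v hv
      rw [Module.End.mem_eigenspace_iff] at hv ⊢
      have := S.rel_LL m n hm (by omega) v
      rw [hv, hL (m + n) (by omega)] at this
      simp only [map_smul, LinearMap.zero_apply, smul_zero] at this
      exact (sub_eq_zero.1 this).symm
    · intro j hj v hv
      rw [Module.End.mem_eigenspace_iff] at hv ⊢
      have := S.rel_LG n j (by omega) hj v
      rw [hv, hG (n + j) (by omega)] at this
      simp only [map_smul, LinearMap.zero_apply, smul_zero] at this
      exact sub_eq_zero.1 this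
  have htop := (hsimple.2 _ hinv).resolve_left hc
  have hsc : S.L n = c • (1 : Module.End ℂ S.carrier) := by
    ext v
    have : v ∈ Module.End.eigenspace (S.L n) c := htop ▸ Submodule.mem_top
    simpa [Module.End.mem_eigenspace_iff] using this
  have hbr : (((t + 1 : ℤ) : ℂ) - ((n - (t + 1) : ℤ) : ℂ)) • S.L n =
      (S.L (t+1) : Module.End ℂ S.carrier) * S.L (n - (t+1)) - S.L (n - (t+1)) * S.L (t+1) := by
    ext v
    have := S.rel_LL (t+1) (n - (t+1)) (by omega) (by omega) v
    have e : (t : ℤ) + 1 + (n - (t+1)) = n := by ring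
    rw [e] at this
    exact this.symm
  have htr := congrArg (LinearMap.trace ℂ S.carrier) hbr
  rw [map_sub, LinearMap.trace_mul_comm, sub_self, map_smul, smul_eq_mul] at htr
  have hne : (((t + 1 : ℤ) : ℂ) - ((n - (t + 1) : ℤ) : ℂ)) ≠ 0 := by
    rw [← Int.cast_sub]
    exact Int.cast_ne_zero.2 (by omega)
  have h0 := (mul_eq_zero.1 htr).resolve_left hne
  rw [hsc, map_smul, LinearMap.trace_one, smul_eq_mul] at h0
  have hd : (Module.finrank ℂ S.carrier : ℂ) ≠ 0 :=
    Nat.cast_ne_zero.2 Module.finrank_pos.ne'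
  rw [hsc, (mul_eq_zero.1 h0).resolve_right hd, zero_smul]

theorem aux_all {t : ℕ} (S : PRep t) (hfd : FiniteDimensional ℂ S.carrier)
    (hsimple : S.IsSimple) (m : ℤ) (hm : 2 * (t : ℤ) + 3 ≤ m) : S.L m = 0 := by
  obtain ⟨N, hN⟩ := aux_vanish (A := Module.End ℂ S.carrier) (t : ℤ) S.L (by omega)
    (fun m n hm hn => by ext v; exact S.rel_LL m n hm hn v)
  have hGv : ∀ k, max N (2 * t + 4) + (t + 1) ≤ k → S.G k = 0 := by
    intro k hk
    ext v
    have := S.rel_LG (k - (t+1)) (t+1) (by omega) (by omega) v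
    rw [hN (k - (t+1)) (by omega)] at this
    have e : k - ((t : ℤ)+1) + (t+1) = k := by ring
    rw [e] at this
    simp only [LinearMap.zero_apply, map_zero, sub_zero] at this
    have hne : (((k - (t+1) : ℤ) : ℂ) - 2 * (((t : ℤ) + 1 : ℤ) : ℂ) - 1) / 2 ≠ 0 := by
      refine div_ne_zero ?_ two_ne_zero
      have : (((k - (t+1) : ℤ) : ℂ) - 2 * (((t : ℤ) + 1 : ℤ) : ℂ) - 1) =
        ((k - (t+1) - 2 * (t + 1) - 1 : ℤ) : ℂ) := by push_cast; ring
      rw [this]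
      exact Int.cast_ne_zero.2 (by omega)
    exact (smul_eq_zero.1 this.symm).resolve_left hne
  have main : ∀ d : ℕ, ∀ k : ℤ, 2 * (t : ℤ) + 3 ≤ k → max N (2 * t + 4) + (t + 1) - d ≤ k →
      S.L k = 0 ∧ S.G k = 0 := by
    intro d
    induction d with
    | zero => intro k _ hk; exact ⟨hN k (by omega), hGv k (by omega)⟩
    | succ d ih =>
      intro k hk hk'
      have h1 : ∀ m, k < m → S.L m = 0 := fun m hm => (ih m (by omega) (by omega)).1
      have h2 : ∀ m, k < m → S.G m = 0 := fun m hm => (ih m (by omega) (by omega)).2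
      exact ⟨aux_L S hfd hsimple k hk h1 h2, aux_G S hsimple k (by omega) h1 h2⟩
  exact (main (max N (2 * t + 4) + (t + 1) - m).toNat m hm (by omega)).1

/-- Let `t ∈ ℤ_+` and let `S` be a finite dimensional simple module over
the Lie superalgebra `p^{(t)}`.  Then `[p^{(t)}_1̄, p^{(t)}_1̄] S = 0`, where the odd part
`p^{(t)}_1̄` is spanned by the `G_{j+1/2}`, `j > t`: every bracket
`[G_{j+1/2}, G_{k+1/2}]` (`j, k > t`) acts as zero on `S`. -/
theorem pRep_finite_dimensional_simple_odd_bracket_trivial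
    (t : ℕ) (ht : 0 < t) (S : PRep t)
    (hfd : FiniteDimensional ℂ S.carrier) (hsimple : S.IsSimple) :
    ∀ j k : ℤ, (t : ℤ) < j → (t : ℤ) < k → ∀ v : S.carrier,
      S.G j (S.G k v) + S.G k (S.G j v) = 0 := by
  intro j k hj hk v
  rw [S.rel_GG j k hj hk v, aux_all S hfd hsimple (j + k + 1) (by omega)]
  simp
end
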